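/- arXiv:1311.6175 — 3 statements merged into one kernel-verified Lean document; each statement's English description precedes it below -/
import Mathlib

section
/- Every α ∈ IO_∞(ℤ) can be written as α = β·γ, where β, γ ∈ IO_∞(ℤ), ran β = ℤ and dom γ = ℤ; that is, O^{[0]}_∞(ℤ)·O^0_∞(ℤ) = IO_∞(ℤ), where O^0_∞(ℤ) = {α ∈ IO_∞(ℤ) : dom α = ℤ} and O^{[0]}_∞(ℤ) = {α ∈ IO_∞(ℤ) : ran α = ℤ}. -/
/-- Composition of partial selfmaps (left map applied first):
`dom (PComp f g) = {x ∈ dom f : f x ∈ dom g}` and `(PComp f g) x = g (f x)`. -/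
def PComp {X : Type*} (f g : X → Option X) : X → Option X := fun x => (f x).bind g

/-- The identity partial selfmap (everywhere defined). -/
def PId {X : Type*} : X → Option X := fun x => some x

/-- A partial selfmap is injective. -/
def PInj {X : Type*} (f : X → Option X) : Prop :=
  ∀ ⦃x y a : X⦄, f x = some a → f y = some a → x = y

/-- A partial selfmap is monotone with respect to the relation `r`. -/
def PMono {X : Type*} (r : X → X → Prop) (f : X → Option X) : Prop :=
  ∀ ⦃x y a b : X⦄, r x y → f x = some a → f y = some b → r a b

/-- The domain of a partial selfmap is cofinite. -/
def DomCof {X : Type*} (f : X → Option X) : Prop := {x | f x = none}.Finite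

/-- The range (image) of a partial selfmap is cofinite. -/
def RanCof {X : Type*} (f : X → Option X) : Prop := {y | ∀ x, f x ≠ some y}.Finite

/-- `IOmap r f` says that `f` is a monotone (w.r.t. `r`) injective partial selfmap
with cofinite domain and cofinite image, i.e. an element of `IO_∞`. -/
def IOmap {X : Type*} (r : X → X → Prop) (f : X → Option X) : Prop :=
  PInj f ∧ PMono r f ∧ DomCof f ∧ RanCof f

/-- The lexicographic order on `L_n × ℤ` (with `L_n = Fin n`):
`(i,m) ≤ (j,k)` iff `i < j`, or `i = j` and `m ≤ k`. -/
def lexLe (n : ℕ) (p q : Fin n × ℤ) : Prop :=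
  p.1 < q.1 ∨ (p.1 = q.1 ∧ p.2 ≤ q.2)

/-- The domain of a partial selfmap, as a set. -/
def pdom {X : Type*} (f : X → Option X) : Set X := {x | ∃ y, f x = some y}

/-- The range (image) of a partial selfmap, as a set. -/
def pran {X : Type*} (f : X → Option X) : Set X := {y | ∃ x, f x = some y}

/-!
The domain `D` of `f ∈ IO_∞(ℤ)` is cofinite, hence unbounded above and below, hence order
isomorphic to `ℤ`: it is the range of an order embedding `g : ℤ ↪o ℤ`. Then `f = g⁻¹ · (g · f)`,
where the partial inverse `g⁻¹` has domain `D` and range `ℤ`, and `g · f` is defined everywhere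
because the range of `g` lies in `D`.
-/

open Function Set

section Unbounded

variable {α : Type*} {s : Set α}

theorem not_bddAbove_of_finite_compl [Preorder α] [IsDirectedOrder α] [Nonempty α] [NoTopOrder α]
    (hs : sᶜ.Finite) : ¬BddAbove s := fun hbdd =>
  not_bddAbove_univ (union_compl_self s ▸ hbdd.union hs.bddAbove)

theorem not_bddBelow_of_finite_compl [Preorder α] [IsCodirectedOrder α] [Nonempty α]
    [NoBotOrder α] (hs : sᶜ.Finite) : ¬BddBelow s :=
  not_bddAbove_of_finite_compl (α := αᵒᵈ) hs

variable [LinearOrder α]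

theorem noMaxOrder_coe_of_not_bddAbove (hs : ¬BddAbove s) : NoMaxOrder s where
  exists_gt a :=
    let ⟨b, hb, hab⟩ := not_bddAbove_iff.1 hs a
    ⟨⟨b, hb⟩, hab⟩

theorem noMinOrder_coe_of_not_bddBelow (hs : ¬BddBelow s) : NoMinOrder s where
  exists_lt a :=
    let ⟨b, hb, hba⟩ := not_bddBelow_iff.1 hs a
    ⟨⟨b, hb⟩, hba⟩

theorem nonempty_orderIso_int [LocallyFiniteOrder α] [NoMaxOrder α] [NoMinOrder α] [Nonempty α] :
    Nonempty (α ≃o ℤ) :=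
  let : SuccOrder α := LinearLocallyFiniteOrder.succOrder α
  let : PredOrder α := LinearLocallyFiniteOrder.predOrder α
  ⟨orderIsoIntOfLinearSuccPredArch⟩

theorem exists_int_orderEmbedding_range_eq [LocallyFiniteOrder α] [Nonempty α]
    (habove : ¬BddAbove s) (hbelow : ¬BddBelow s) : ∃ g : ℤ ↪o α, range g = s := by
  classical
  have := noMaxOrder_coe_of_not_bddAbove habove
  have := noMinOrder_coe_of_not_bddBelow hbelow
  have : Nonempty s := (nonempty_of_not_bddAbove habove).to_subtype
  let : LocallyFiniteOrder s := inferInstanceAs (LocallyFiniteOrder {x // x ∈ s})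
  obtain ⟨e⟩ := nonempty_orderIso_int (α := s)
  refine ⟨e.symm.toOrderEmbedding.trans (OrderEmbedding.subtype (· ∈ s)), ?_⟩
  exact (e.symm.surjective.range_comp Subtype.val).trans Subtype.range_coe

end Unbounded

section PartialSelfmap

variable {X : Type*} {r : X → X → Prop} {f b : X → Option X} {g : X → X}

theorem notMem_pdom {x : X} : x ∉ pdom f ↔ f x = none := by
  rw [Option.eq_none_iff_forall_ne_some]
  exact not_exists

theorem domCof_iff_finite_compl_pdom : DomCof f ↔ (pdom f)ᶜ.Finite := by
  have : (pdom f)ᶜ = {x | f x = none} := Set.ext fun _ => notMem_pdom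
  rw [this, DomCof]

theorem ranCof_iff_finite_compl_pran : RanCof f ↔ (pran f)ᶜ.Finite := by
  have : (pran f)ᶜ = {y | ∀ x, f x ≠ some y} := Set.ext fun _ => not_exists
  rw [this, RanCof]

theorem pdom_eq_range_of_isPartialInv (h : IsPartialInv g b) : pdom b = range g :=
  Set.ext fun x => exists_congr fun a => h a x

theorem pran_eq_univ_of_isPartialInv (h : IsPartialInv g b) : pran b = univ :=
  eq_univ_of_forall fun a => ⟨g a, h.eq a⟩

theorem PInj.of_isPartialInv (h : IsPartialInv g b) : PInj b := fun x y a hx hy =>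
  ((h a x).1 hx).symm.trans ((h a y).1 hy)

theorem PMono.of_isPartialInv {g : r ↪r r} (h : IsPartialInv g b) : PMono r b := by
  intro x y a a' hxy hx hy
  rwa [← (h a x).1 hx, ← (h a' y).1 hy, g.map_rel_iff] at hxy

theorem IOmap.of_isPartialInv {g : r ↪r r} (h : IsPartialInv g b) (hg : (range g)ᶜ.Finite) :
    IOmap r b := by
  refine ⟨.of_isPartialInv h, .of_isPartialInv h, ?_, ?_⟩
  · rwa [domCof_iff_finite_compl_pdom, pdom_eq_range_of_isPartialInv h]
  · rw [ranCof_iff_finite_compl_pran, pran_eq_univ_of_isPartialInv h, compl_univ]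
    exact finite_empty

theorem pComp_comp_of_isPartialInv (h : IsPartialInv g b) (hfg : pdom f ⊆ range g) :
    PComp b (f ∘ g) = f := by
  funext x
  by_cases hx : x ∈ range g
  · obtain ⟨a, rfl⟩ := hx
    rw [PComp, h.eq, Option.bind_some, comp_apply]
  · have hbx : b x = none := notMem_pdom.1 (pdom_eq_range_of_isPartialInv h ▸ hx)
    have hfx : f x = none := notMem_pdom.1 fun hxf => hx (hfg hxf)
    rw [PComp, hbx, hfx, Option.bind_none]

theorem pdom_comp (f : X → Option X) (g : X → X) : pdom (f ∘ g) = g ⁻¹' pdom f :=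
  rfl

theorem pran_comp (hfg : pdom f ⊆ range g) : pran (f ∘ g) = pran f := by
  ext y
  constructor
  · rintro ⟨a, ha⟩
    exact ⟨g a, ha⟩
  · rintro ⟨x, hx⟩
    obtain ⟨a, rfl⟩ := hfg ⟨y, hx⟩
    exact ⟨a, hx⟩

theorem PInj.comp_injective (hf : PInj f) (hg : Injective g) : PInj (f ∘ g) :=
  fun _ _ _ hx hy => hg (hf hx hy)

theorem PMono.comp_relHom (hf : PMono r f) (g : r →r r) : PMono r (f ∘ g) :=
  fun _ _ _ _ hxy hx hy => hf (g.map_rel hxy) hx hy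

theorem DomCof.comp_injective (hf : DomCof f) (hg : Injective g) : DomCof (f ∘ g) :=
  Finite.preimage hg.injOn hf

theorem RanCof.comp (hf : RanCof f) (hfg : pdom f ⊆ range g) : RanCof (f ∘ g) := by
  rw [ranCof_iff_finite_compl_pran] at hf ⊢
  rwa [pran_comp hfg]

theorem IOmap.comp_relEmbedding (hf : IOmap r f) (g : r ↪r r) (hfg : pdom f ⊆ range g) :
    IOmap r (f ∘ g) :=
  let ⟨hinj, hmono, hdom, hran⟩ := hf
  ⟨hinj.comp_injective g.injective, hmono.comp_relHom g.toRelHom,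
    hdom.comp_injective g.injective, hran.comp hfg⟩

end PartialSelfmap

theorem DomCof.exists_int_orderEmbedding_range_eq_pdom {α : Type*}
    [LinearOrder α] [LocallyFiniteOrder α] [Nonempty α] [NoMaxOrder α] [NoMinOrder α]
    {f : α → Option α} (hf : DomCof f) : ∃ g : ℤ ↪o α, range g = pdom f :=
  have hfin := domCof_iff_finite_compl_pdom.1 hf
  exists_int_orderEmbedding_range_eq (not_bddAbove_of_finite_compl hfin)
    (not_bddBelow_of_finite_compl hfin)

theorem stmt15_general {X : Type*} {r : X → X → Prop} (f : X → Option X) (hf : IOmap r f)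
    (g : r ↪r r) (hg : range g = pdom f) :
    ∃ b c : X → Option X, IOmap r b ∧ IOmap r c ∧
      pran b = univ ∧ pdom c = univ ∧ PComp b c = f := by
  have hfg : pdom f ⊆ range g := hg.ge
  have hfin : (range g)ᶜ.Finite := hg ▸ domCof_iff_finite_compl_pdom.1 hf.2.2.1
  have hinv : IsPartialInv g (partialInv g) := g.injective.isPartialInv
  refine ⟨partialInv g, f ∘ g, .of_isPartialInv hinv hfin, hf.comp_relEmbedding g hfg,
    pran_eq_univ_of_isPartialInv hinv, ?_, pComp_comp_of_isPartialInv hinv hfg⟩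
  rw [pdom_comp, ← hg, preimage_range]

/-- `O^{[0]}_∞(ℤ)·O^0_∞(ℤ) = IO_∞(ℤ)`: every `α ∈ IO_∞(ℤ)` can be written as
`α = β·γ` (with `β` applied first) where `β, γ ∈ IO_∞(ℤ)`, `ran β = ℤ` and
`dom γ = ℤ`. -/
theorem stmt15 (f : ℤ → Option ℤ) (hf : IOmap (· ≤ · : ℤ → ℤ → Prop) f) :
    ∃ b c : ℤ → Option ℤ, IOmap (· ≤ · : ℤ → ℤ → Prop) b ∧
      IOmap (· ≤ · : ℤ → ℤ → Prop) c ∧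
      pran b = Set.univ ∧ pdom c = Set.univ ∧ PComp b c = f := by
  obtain ⟨g, hg⟩ := hf.2.2.1.exists_int_orderEmbedding_range_eq_pdom
  exact stmt15_general f hf g hg
end

section
/- For every integer k, the set {ε_k, ς_1} generates IO_∞(ℤ) as an inverse semigroup: the smallest subset of IO_∞(ℤ) that contains ε_k and ς_1 and is closed under composition of partial maps and under taking the inverse partial map α ↦ α⁻¹ is all of IO_∞(ℤ). Here ε_k : ℤ → ℤ is the everywhere-defined map with ε_k(i) = i + 1 for i > k and ε_k(i) = i for i ≤ k, and ς_1 : ℤ → ℤ is the translation ς_1(i) = i + 1. In particular, IO_∞(ℤ) is finitely generated as an inverse semigroup. -/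
/-- The partial selfmap `ε_k` of `ℤ`: everywhere defined, `i ↦ i + 1` for `i > k`
and `i ↦ i` for `i ≤ k`. -/
def epsZ (k : ℤ) : ℤ → Option ℤ := fun i => some (if k < i then i + 1 else i)

/-- The translation `ς_1 : i ↦ i + 1` of `ℤ`, as a partial selfmap. -/
def sigZ : ℤ → Option ℤ := fun i => some (i + 1)

open Function Set

section PartialMap

variable {X : Type*} {T : Set (X → Option X)}

/-- The everywhere-defined map `e` belongs to the set `T` of partial selfmaps together with its
inverse partial map, so that both can serve as factors of elements of `T`. The inverse is specified
by `IsPartialInv`, which determines it and forces `e` to be injective. -/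
def MemWithInv (T : Set (X → Option X)) (e : X → X) : Prop :=
  some ∘ e ∈ T ∧ ∃ e' ∈ T, IsPartialInv e e'

theorem MemWithInv.of_injective
    (hinv : ∀ f ∈ T, ∀ g : X → Option X, (∀ x y, f x = some y ↔ g y = some x) → g ∈ T)
    {e : X → X} (he : Injective e) (heT : some ∘ e ∈ T) : MemWithInv T e :=
  ⟨heT, partialInv e,
    hinv _ heT _ fun x y => Option.some_inj.trans (he.isPartialInv x y).symm, he.isPartialInv⟩

theorem MemWithInv.comp (hcomp : ∀ f ∈ T, ∀ g ∈ T, PComp f g ∈ T) {d e : X → X}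
    (hd : MemWithInv T d) (he : MemWithInv T e) : MemWithInv T (d ∘ e) := by
  obtain ⟨hdT, d', hd'T, hd'⟩ := hd
  obtain ⟨heT, e', he'T, he'⟩ := he
  exact ⟨hcomp _ heT _ hdT, PComp d' e', hcomp _ hd'T _ he'T, he'.comp hd'⟩

theorem MemWithInv.symm {e : X ≃ X} (he : MemWithInv T e) : MemWithInv T e.symm := by
  obtain ⟨heT, e', he'T, he'⟩ := he
  have he'_eq : e' = some ∘ e.symm := by
    funext y
    rw [comp_apply, ← he'.eq (e.symm y), e.apply_symm_apply]
  refine ⟨he'_eq ▸ he'T, some ∘ e, heT, fun y x => ?_⟩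
  simp only [comp_apply, Option.some.injEq, e.symm_apply_eq, eq_comm]

theorem compl_setOf_eq_none (f : X → Option X) : {x | f x = none}ᶜ = pdom f := by
  ext x
  exact Option.ne_none_iff_exists'

theorem compl_setOf_forall_ne_some (f : X → Option X) : {y | ∀ x, f x ≠ some y}ᶜ = pran f := by
  ext y
  exact not_forall_not

theorem exists_orderIso_eq_PComp [LinearOrder X] {f : X → Option X} (hinj : PInj f)
    (hmono : PMono (· ≤ ·) f) {d e : X ↪o X} {d' : X → Option X} (hd' : IsPartialInv d d')
    (hd : range d = pdom f) (he : range e = pran f) :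
    ∃ g : X ≃o X, f = PComp d' (PComp (some ∘ g) (some ∘ e)) := by
  have hval : ∀ x, ∃ y, f (d x) = some (e y) := by
    intro x
    obtain ⟨z, hz⟩ : d x ∈ pdom f := hd ▸ mem_range_self x
    obtain ⟨y, rfl⟩ : z ∈ range e := he ▸ ⟨d x, hz⟩
    exact ⟨y, hz⟩
  choose g hg using hval
  have g_inj : Injective g := fun x y hxy => d.injective (hinj (hg x) (hxy ▸ hg y))
  have g_mono : Monotone g := fun x y hxy =>
    e.le_iff_le.1 (hmono (d.monotone hxy) (hg x) (hg y))
  have g_surj : Surjective g := by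
    intro y
    obtain ⟨z, hz⟩ : e y ∈ pran f := he ▸ mem_range_self y
    obtain ⟨x, rfl⟩ : z ∈ range d := hd ▸ ⟨e y, hz⟩
    exact ⟨x, e.injective (Option.some.inj ((hg x).symm.trans hz))⟩
  refine ⟨(g_mono.strictMono_of_injective g_inj).orderIsoOfSurjective g g_surj, funext fun z => ?_⟩
  by_cases hz : z ∈ range d
  · obtain ⟨x, rfl⟩ := hz
    simp [PComp, hd'.eq, hg]
  · have hfz : f z = none := by
      rwa [hd, ← compl_setOf_eq_none, notMem_compl_iff] at hz
    have hd'z : d' z = none :=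
      Option.eq_none_iff_forall_ne_some.2 fun x hx => hz ⟨x, (hd' x z).1 hx⟩
    simp only [PComp, hfz, hd'z, Option.bind_none]

theorem exists_orderEmbedding_range_eq_compl [Preorder X]
    (hcomp : ∀ f ∈ T, ∀ g ∈ T, PComp f g ∈ T) (hid : MemWithInv T id)
    (hsingleton : ∀ a, ∃ e : X ↪o X, range e = {a}ᶜ ∧ MemWithInv T e)
    {s : Set X} (hs : s.Finite) : ∃ d : X ↪o X, range d = sᶜ ∧ MemWithInv T d := by
  induction s, hs using Set.Finite.induction_on with
  | empty => exact ⟨RelEmbedding.refl _, by simp, hid⟩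
  | @insert a s ha _ ih =>
    obtain ⟨d, hd, hdT⟩ := ih
    obtain ⟨b, rfl⟩ : a ∈ range d := hd ▸ ha
    obtain ⟨e, he, heT⟩ := hsingleton b
    refine ⟨e.trans d, ?_, hdT.comp hcomp heT⟩
    calc range (e.trans d) = d '' range e := range_comp d e
      _ = range d \ {d b} := by
        rw [he, image_compl_eq_range_sdiff_image d.injective, image_singleton]
      _ = (insert (d b) s)ᶜ := by rw [hd, sdiff_eq, ← compl_union, union_singleton]

end PartialMap

section IntMap

/-- The map underlying `ε_k`, as an order embedding of `ℤ`; its range misses exactly `k + 1`. -/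
noncomputable def epsEmb (k : ℤ) : ℤ ↪o ℤ :=
  OrderEmbedding.ofMapLEIff (fun i => if k < i then i + 1 else i) fun i j => by
    split_ifs <;> omega

theorem epsEmb_apply (k i : ℤ) : epsEmb k i = if k < i then i + 1 else i := rfl

theorem range_epsEmb (k : ℤ) : range (epsEmb k) = {k + 1}ᶜ := by
  ext y
  simp only [mem_range, epsEmb_apply, mem_compl_singleton_iff]
  constructor
  · rintro ⟨x, rfl⟩
    split_ifs <;> omega
  · intro hy
    by_cases hyk : y ≤ k
    · exact ⟨y, if_neg hyk.not_gt⟩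
    · exact ⟨y - 1, by rw [if_pos (by omega), sub_add_cancel]⟩

theorem epsEmb_eq_conj (j k : ℤ) :
    ⇑(epsEmb j) = (· + (j - k)) ∘ epsEmb k ∘ (· + (k - j)) := by
  funext i
  simp only [comp_apply, epsEmb_apply]
  split_ifs <;> omega

theorem coe_intOrderIso_eq_add (g : ℤ ≃o ℤ) : ⇑g = (· + g 0) := by
  let gShift : AddConstMap ℤ ℤ 1 1 := ⟨g, g.map_succ⟩
  funext n
  have hgn : g (0 + n) = g 0 + n := AddConstMapClass.map_add_int gShift 0 n
  rwa [zero_add, add_comm] at hgn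

theorem memWithInv_add {T : Set (ℤ → Option ℤ)} (hcomp : ∀ f ∈ T, ∀ g ∈ T, PComp f g ∈ T)
    (hone : MemWithInv T (· + 1)) (n : ℤ) : MemWithInv T (· + n) := by
  have hneg : MemWithInv T (· + -1) := MemWithInv.symm (e := Equiv.addRight 1) hone
  induction n using Int.induction_on with
  | zero => simpa [comp_def] using hone.comp hcomp hneg
  | succ n ih => simpa [comp_def, add_assoc] using hone.comp hcomp ih
  | pred n ih => simpa [comp_def, add_assoc, sub_eq_add_neg] using hneg.comp hcomp ih

theorem stmt16_general (k : ℤ) (T : Set (ℤ → Option ℤ)) (hε : MemWithInv T (epsEmb k))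
    (hς : MemWithInv T (· + 1)) (hcomp : ∀ f ∈ T, ∀ g ∈ T, PComp f g ∈ T) :
    ∀ f : ℤ → Option ℤ, IOmap (· ≤ · : ℤ → ℤ → Prop) f → f ∈ T := by
  have hadd : ∀ n : ℤ, MemWithInv T (· + n) := memWithInv_add hcomp hς
  have heps : ∀ j, MemWithInv T (epsEmb j) := fun j => by
    rw [epsEmb_eq_conj j k]
    exact (hadd _).comp hcomp (hε.comp hcomp (hadd _))
  have hemb {s : Set ℤ} (hfin : s.Finite) : ∃ d : ℤ ↪o ℤ, range d = sᶜ ∧ MemWithInv T d :=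
    exists_orderEmbedding_range_eq_compl hcomp ((funext add_zero : (· + (0 : ℤ)) = id) ▸ hadd 0)
      (fun a => ⟨epsEmb (a - 1), by rw [range_epsEmb, sub_add_cancel], heps _⟩) hfin
  rintro f ⟨hinj, hmono, hdom, hran⟩
  obtain ⟨d, hd, -, d', hd'T, hd'⟩ := hemb hdom
  obtain ⟨e, he, heT, -⟩ := hemb hran
  rw [compl_setOf_eq_none] at hd
  rw [compl_setOf_forall_ne_some] at he
  obtain ⟨g, rfl⟩ := exists_orderIso_eq_PComp hinj hmono hd' hd he
  rw [coe_intOrderIso_eq_add g]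
  exact hcomp _ hd'T _ (hcomp _ (hadd _).1 _ heT)

end IntMap

/-- `{ε_k, ς_1}` generates `IO_∞(ℤ)` as an inverse semigroup: every subset of
`IO_∞(ℤ)` containing `ε_k` and `ς_1` and closed under composition of partial maps and
under taking the inverse partial map is all of `IO_∞(ℤ)`. In particular `IO_∞(ℤ)` is
finitely generated as an inverse semigroup. -/
theorem stmt16 (k : ℤ) (T : Set (ℤ → Option ℤ))
    (hT : ∀ f ∈ T, IOmap (· ≤ · : ℤ → ℤ → Prop) f)
    (he : epsZ k ∈ T) (hs : sigZ ∈ T)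
    (hcomp : ∀ f ∈ T, ∀ g ∈ T, PComp f g ∈ T)
    (hinv : ∀ f ∈ T, ∀ g : ℤ → Option ℤ,
      (∀ x y : ℤ, f x = some y ↔ g y = some x) → g ∈ T) :
    ∀ f : ℤ → Option ℤ, IOmap (· ≤ · : ℤ → ℤ → Prop) f → f ∈ T :=
  stmt16_general k T (.of_injective hinv (epsEmb k).injective he)
    (.of_injective hinv (add_left_injective 1) hs) hcomp
end

section
/- Let n be a positive integer and let (k_1,…,k_n) be integers. For j ∈ {1,…,n} define everywhere-defined maps ε_{k_j[j]} and ς_{1[j]} on L_n × ℤ by: ε_{k_j[j]}(j,i) = (j, i+1) for i > k_j, ε_{k_j[j]}(j,i) = (j,i) for i ≤ k_j, and ε_{k_j[j]}(m,i) = (m,i) for m ≠ j; ς_{1[j]}(j,i) = (j, i+1) and ς_{1[j]}(m,i) = (m,i) for m ≠ j. Then the set {ε_{k_1[1]}, …, ε_{k_n[n]}, ς_{1[1]}, …, ς_{1[n]}} generates IO_∞(ℤ^n_lex) as an inverse semigroup: the smallest subset of IO_∞(ℤ^n_lex) containing these 2n elements and closed under composition of partial maps and under taking the inverse partial map equals IO_∞(ℤ^n_lex).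 In particular, IO_∞(ℤ^n_lex) is finitely generated as an inverse semigroup. -/
/-- The partial selfmap `ε_{k[j]}` of `L_n × ℤ`: everywhere defined, shifting
`(j, i) ↦ (j, i+1)` for `i > k` and fixing everything else. -/
def epsL (n : ℕ) (k : ℤ) (j : Fin n) : Fin n × ℤ → Option (Fin n × ℤ) :=
  fun x => some (if x.1 = j ∧ k < x.2 then (x.1, x.2 + 1) else x)

/-- The partial selfmap `ς_{1[j]}` of `L_n × ℤ`: the translation `(j, i) ↦ (j, i+1)`
on the `j`-th line, fixing all other lines. -/
def sigL (n : ℕ) (j : Fin n) : Fin n × ℤ → Option (Fin n × ℤ) :=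
  fun x => some (if x.1 = j then (x.1, x.2 + 1) else x)

/-!
Let `A` and `B` be the finite complements of the domain and of the range of `f ∈ IO_∞(X)`, and let
`d` and `e` be order embeddings of `X` into itself with ranges `X \ A` and `X \ B`. Then
`g = e⁻¹ ∘ f ∘ d` is an order automorphism of `X`, and `f = e ∘ g ∘ d⁻¹`. Embeddings such as `d`
and `e` are compositions of embeddings that omit a single point. On the lexicographic product these
are the maps `ε_{k[j]}` for arbitrary `k`, which are conjugate to the given `ε_{k_j[j]}` by
translations. An order automorphism `g` commutes with the successor `(j, i) ↦ (j, i + 1)`, so it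
carries lines onto lines by translations; it then permutes the lines monotonically, hence preserves
each of them.
-/

section PartialSelfmap

variable {X : Type*} {r : X → X → Prop} {T : Set (X → Option X)} {f : X → Option X}

/-- A set of partial selfmaps closed under composition and under inverses. It is the notion of
inverse subsemigroup for which generation is considered; the elements of `T` need not be injective,
and an inverse is any map with the transposed graph, which exists only for injective elements. -/
structure IsInverseClosed (T : Set (X → Option X)) : Prop where
  comp_mem : ∀ f ∈ T, ∀ g ∈ T, PComp f g ∈ T
  inv_mem : ∀ f ∈ T, ∀ g : X → Option X, (∀ x y, f x = some y ↔ g y = some x) → g ∈ T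

theorem IsInverseClosed.some_comp_mem (hT : IsInverseClosed T) {u v : X → X}
    (hu : some ∘ u ∈ T) (hv : some ∘ v ∈ T) : some ∘ v ∘ u ∈ T :=
  hT.comp_mem _ hu _ hv

theorem IsInverseClosed.partialInv_mem (hT : IsInverseClosed T) {u : X → X}
    (hu : u.Injective) (huT : some ∘ u ∈ T) : Function.partialInv u ∈ T :=
  hT.inv_mem _ huT _ fun x y => by simp [hu.isPartialInv x y]

theorem PMono.rel_iff_of_total [Std.Total r] [Std.Antisymm r] (hmono : PMono r f) (hinj : PInj f)
    {x y a b : X} (hx : f x = some a) (hy : f y = some b) : r a b ↔ r x y := by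
  refine ⟨fun hab => ?_, fun hxy => hmono hxy hx hy⟩
  rcases Std.Total.total (r := r) x y with hxy | hyx
  · exact hxy
  · obtain rfl : a = b := Std.Antisymm.antisymm a b hab (hmono hyx hy hx)
    obtain rfl : x = y := hinj hx hy
    exact hyx

theorem exists_relIso_of_range_eq [Std.Total r] [Std.Antisymm r] (hinj : PInj f)
    (hmono : PMono r f) {d e : r ↪r r} (hd : Set.range d = pdom f) (he : Set.range e = pran f) :
    ∃ g : r ≃r r, ∀ x, f (d x) = some (e (g x)) := by
  have hlift : ∀ x, ∃ y, f (d x) = some (e y) := fun x => by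
    obtain ⟨b, hb⟩ : d x ∈ pdom f := hd ▸ Set.mem_range_self x
    obtain ⟨y, rfl⟩ : b ∈ Set.range e := he ▸ ⟨d x, hb⟩
    exact ⟨y, hb⟩
  choose u hu using hlift
  have hrel : ∀ x y, r (u x) (u y) ↔ r x y := fun x y => by
    rw [← e.map_rel_iff, hmono.rel_iff_of_total hinj (hu x) (hu y), d.map_rel_iff]
  have hu_inj : u.Injective := fun x y hxy =>
    d.injective (hinj (hu x) (by rw [hu y, hxy]))
  have hu_surj : u.Surjective := fun y => by
    obtain ⟨x, hx⟩ : e y ∈ pran f := he ▸ Set.mem_range_self y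
    obtain ⟨z, rfl⟩ : x ∈ Set.range d := hd ▸ ⟨e y, hx⟩
    exact ⟨z, e.injective (Option.some.inj ((hu z).symm.trans hx))⟩
  exact ⟨⟨Equiv.ofBijective u ⟨hu_inj, hu_surj⟩, hrel _ _⟩, hu⟩

theorem eq_PComp_partialInv {d u : X → X} (hd : d.Injective) (hdom : pdom f ⊆ Set.range d)
    (hu : ∀ x, f (d x) = some (u x)) : f = PComp (Function.partialInv d) (some ∘ u) := by
  funext y
  by_cases hy : y ∈ Set.range d
  · obtain ⟨x, rfl⟩ := hy
    simp [PComp, Function.partialInv_left hd, hu]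
  · have hf : f y = none := Option.eq_none_iff_forall_ne_some.2 fun b hb => hy (hdom ⟨b, hb⟩)
    have hinv : Function.partialInv d y = none :=
      Option.eq_none_iff_forall_ne_some.2 fun x hx => hy ⟨x, (hd.isPartialInv x y).1 hx⟩
    simp [PComp, hf, hinv]

theorem IsInverseClosed.exists_relEmbedding_range_compl (hT : IsInverseClosed T) (hid : some ∈ T)
    (hpt : ∀ a, ∃ d : r ↪r r, Set.range d = {a}ᶜ ∧ some ∘ d ∈ T) {A : Set X} (hA : A.Finite) :
    ∃ d : r ↪r r, Set.range d = Aᶜ ∧ some ∘ d ∈ T := by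
  induction A, hA using Set.Finite.induction_on with
  | empty => exact ⟨RelEmbedding.refl r, Set.range_id.trans Set.compl_empty.symm, hid⟩
  | @insert a s ha _ ih =>
    obtain ⟨d, hd, hdT⟩ := ih
    obtain ⟨b, rfl⟩ : a ∈ Set.range d := hd ▸ ha
    obtain ⟨d', hd', hdT'⟩ := hpt b
    refine ⟨d'.trans d, ?_, hT.some_comp_mem (u := d') hdT' hdT⟩
    calc Set.range (d ∘ d') = d '' {b}ᶜ := by rw [Set.range_comp, hd']
      _ = Set.range d \ {d b} := by
        rw [Set.compl_eq_univ_sdiff, Set.image_sdiff d.injective, Set.image_univ,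
          Set.image_singleton]
      _ = (insert (d b) s)ᶜ := by rw [hd]; ext; simp [and_comm]

theorem IsInverseClosed.mem_of_IOmap [Std.Total r] [Std.Antisymm r] (hT : IsInverseClosed T)
    (haut : ∀ g : r ≃r r, some ∘ g ∈ T)
    (hpt : ∀ a, ∃ d : r ↪r r, Set.range d = {a}ᶜ ∧ some ∘ d ∈ T) (hf : IOmap r f) : f ∈ T := by
  obtain ⟨hinj, hmono, hdom, hran⟩ := hf
  have hid : some ∈ T := haut (RelIso.refl r)
  obtain ⟨d, hd, hdT⟩ := hT.exists_relEmbedding_range_compl hid hpt hdom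
  obtain ⟨e, he, heT⟩ := hT.exists_relEmbedding_range_compl hid hpt hran
  replace hd : Set.range d = pdom f := by
    rw [hd]; ext x; simp [pdom, Option.ne_none_iff_exists']
  replace he : Set.range e = pran f := by rw [he]; ext y; simp [pran]
  obtain ⟨g, hg⟩ := exists_relIso_of_range_eq hinj hmono hd he
  rw [eq_PComp_partialInv (u := e ∘ g) d.injective hd.ge hg]
  exact hT.comp_mem _ (hT.partialInv_mem d.injective hdT) _ (hT.some_comp_mem (haut g) heT)

end PartialSelfmap

section Translation

variable {ι : Type*}

/-- The translation of `ι × ℤ` that moves the line `{j} × ℤ` by `c j`, for every `j`. -/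
def translation (c : ι → ℤ) (x : ι × ℤ) : ι × ℤ := (x.1, x.2 + c x.1)

theorem translation_comp (c d : ι → ℤ) : translation d ∘ translation c = translation (c + d) :=
  funext fun x => by simp [translation, add_assoc]

theorem translation_neg_apply_eq_iff (c : ι → ℤ) (x y : ι × ℤ) :
    translation (-c) y = x ↔ translation c x = y := by
  have : (-c) y.1 = -c y.1 := rfl
  grind [translation]

theorem IsInverseClosed.some_comp_translation_mem [Finite ι] [Nonempty ι] [DecidableEq ι]
    {T : Set (ι × ℤ → Option (ι × ℤ))} (hT : IsInverseClosed T)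
    (hsingle : ∀ j, some ∘ translation (Pi.single j 1) ∈ T) (c : ι → ℤ) :
    some ∘ translation c ∈ T := by
  have hadd {a b : ι → ℤ} (ha : some ∘ translation a ∈ T) (hb : some ∘ translation b ∈ T) :
      some ∘ translation (a + b) ∈ T := translation_comp a b ▸ hT.some_comp_mem ha hb
  have hneg {a : ι → ℤ} (ha : some ∘ translation a ∈ T) : some ∘ translation (-a) ∈ T :=
    hT.inv_mem _ ha _ fun x y => by simp [translation_neg_apply_eq_iff]
  let H : AddSubgroup (ι → ℤ) :=
    { carrier := {a | some ∘ translation a ∈ T}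
      add_mem' := hadd
      zero_mem' := by
        obtain ⟨j⟩ := ‹Nonempty ι›
        simpa using hadd (hsingle j) (hneg (hsingle j))
      neg_mem' := hneg }
  have hH (j : ι) : Pi.single j (c j) ∈ H := by
    have hzsmul : c j • Pi.single j (1 : ℤ) ∈ H := H.zsmul_mem (hsingle j) (c j)
    simpa [← Pi.single_smul] using hzsmul
  exact AddSubgroup.pi_mem_of_single_mem c hH

end Translation

section LexAutomorphism

variable {ι : Type*} [LinearOrder ι]

theorem toLex_covBy_toLex_add_one (x : ι × ℤ) : toLex x ⋖ toLex (x.1, x.2 + 1) :=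
  Prod.Lex.toLex_covBy_toLex_iff.2 (Or.inl ⟨rfl, Order.covBy_add_one x.2⟩)

theorem orderIso_apply_toLex_add_one (e : ι ×ₗ ℤ ≃o ι ×ₗ ℤ) (x : ι × ℤ) :
    e (toLex (x.1, x.2 + 1)) = toLex ((ofLex (e (toLex x))).1, (ofLex (e (toLex x))).2 + 1) :=
  ((apply_covBy_apply_iff e).2 (toLex_covBy_toLex_add_one x)).unique_right
    (toLex_covBy_toLex_add_one (ofLex (e (toLex x))))

theorem orderIso_apply_toLex_eq_add (e : ι ×ₗ ℤ ≃o ι ×ₗ ℤ) (j : ι) (i : ℤ) :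
    e (toLex (j, i)) = toLex ((ofLex (e (toLex (j, 0)))).1, i + (ofLex (e (toLex (j, 0)))).2) := by
  induction i using Int.induction_on with
  | zero => simp
  | succ i ih =>
    rw [orderIso_apply_toLex_add_one e (j, i), ih]
    simp [add_right_comm]
  | pred i ih =>
    have hsucc := orderIso_apply_toLex_add_one e (j, -i - 1)
    rw [sub_add_cancel, ih, toLex_inj, Prod.mk.injEq] at hsucc
    refine congrArg toLex (Prod.ext hsucc.1.symm ?_)
    change (ofLex (e (toLex (j, -i - 1)))).2 = _
    linarith [hsucc.2]

theorem exists_apply_toLex_eq_toLex_translation [WellFoundedLT ι] (e : ι ×ₗ ℤ ≃o ι ×ₗ ℤ) :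
    ∃ c : ι → ℤ, ∀ x, e (toLex x) = toLex (translation c x) := by
  let line (j : ι) : ι := (ofLex (e (toLex (j, 0)))).1
  let c (j : ι) : ℤ := (ofLex (e (toLex (j, 0)))).2
  have he (j : ι) (i : ℤ) : e (toLex (j, i)) = toLex (line j, i + c j) :=
    orderIso_apply_toLex_eq_add e j i
  have line_strictMono : StrictMono line := fun j j' hj => by
    have hlt : e (toLex (j, c j' - c j)) < e (toLex (j', 0)) :=
      e.lt_iff_lt.2 (Prod.Lex.toLex_lt_toLex.2 (Or.inl hj))
    simpa [he, Prod.Lex.toLex_lt_toLex] using hlt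
  have line_surjective : line.Surjective := fun j => by
    obtain ⟨x, hx⟩ := e.surjective (toLex (j, 0))
    exact ⟨(ofLex x).1, congrArg Prod.fst (toLex_inj.1 ((he _ _).symm.trans hx))⟩
  have line_eq (j : ι) : line j = j :=
    DFunLike.congr_fun (Subsingleton.elim
      (line_strictMono.orderIsoOfSurjective line line_surjective) (OrderIso.refl ι)) j
  exact ⟨c, fun x => (he x.1 x.2).trans (by rw [line_eq]; rfl)⟩

end LexAutomorphism

section LexLe

variable {n : ℕ}

theorem lexLe_iff_toLex_le_toLex (p q : Fin n × ℤ) : lexLe n p q ↔ toLex p ≤ toLex q :=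
  Prod.Lex.toLex_le_toLex.symm

instance : Std.Total (lexLe n) where
  total p q := by simpa only [lexLe_iff_toLex_le_toLex] using le_total (toLex p) (toLex q)

instance : Std.Antisymm (lexLe n) where
  antisymm p q hpq hqp := toLex_inj.1 <|
    le_antisymm ((lexLe_iff_toLex_le_toLex p q).1 hpq) ((lexLe_iff_toLex_le_toLex q p).1 hqp)

theorem exists_eq_translation_of_relIso (g : lexLe n ≃r lexLe n) :
    ∃ c : Fin n → ℤ, ⇑g = translation c := by
  let e : Fin n ×ₗ ℤ ≃o Fin n ×ₗ ℤ :=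
    { toEquiv := ofLex.trans (g.toEquiv.trans toLex)
      map_rel_iff' := fun {a b} => by
        simpa [lexLe_iff_toLex_le_toLex] using g.map_rel_iff (a := ofLex a) (b := ofLex b) }
  obtain ⟨c, hc⟩ := exists_apply_toLex_eq_toLex_translation e
  exact ⟨c, funext hc⟩

theorem sigL_eq_some_comp_translation (j : Fin n) :
    sigL n j = some ∘ translation (Pi.single j 1) := by
  funext x
  by_cases hx : x.1 = j <;> simp [sigL, translation, hx]

/-- The everywhere defined map `ε_{k[j]}` as an embedding of the lexicographic order. -/
def epsEmbedding (k : ℤ) (j : Fin n) : lexLe n ↪r lexLe n where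
  toFun x := if x.1 = j ∧ k < x.2 then (x.1, x.2 + 1) else x
  inj' x y := by grind
  map_rel_iff' {x y} := by
    change lexLe n (if _ then _ else _) (if _ then _ else _) ↔ lexLe n x y
    grind [lexLe]

theorem epsEmbedding_apply (k : ℤ) (j : Fin n) (x : Fin n × ℤ) :
    epsEmbedding k j x = if x.1 = j ∧ k < x.2 then (x.1, x.2 + 1) else x :=
  rfl

theorem some_comp_epsEmbedding (k : ℤ) (j : Fin n) : some ∘ epsEmbedding k j = epsL n k j :=
  rfl

theorem range_epsEmbedding (k : ℤ) (j : Fin n) :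
    Set.range (epsEmbedding k j) = {(j, k + 1)}ᶜ := by
  ext y
  simp only [Set.mem_range, epsEmbedding_apply, Set.mem_compl_singleton_iff]
  constructor
  · rintro ⟨x, rfl⟩
    grind
  · intro hy
    exact ⟨if y.1 = j ∧ k < y.2 then (y.1, y.2 - 1) else y, by grind⟩

theorem epsL_eq_conj_translation (a k : ℤ) (j : Fin n) :
    epsL n a j = PComp (some ∘ translation fun _ => k - a)
      (PComp (epsL n k j) (some ∘ translation fun _ => a - k)) := by
  funext x
  simp only [PComp, epsL, translation, Function.comp_apply, Option.bind_some]
  grind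

end LexLe

/-- `{ε_{k_1[1]}, …, ε_{k_n[n]}, ς_{1[1]}, …, ς_{1[n]}}` generates `IO_∞(ℤ^n_lex)` as
an inverse semigroup: every subset of `IO_∞(ℤ^n_lex)` containing these `2n` elements
and closed under composition of partial maps and under taking the inverse partial map
is all of `IO_∞(ℤ^n_lex)`. In particular `IO_∞(ℤ^n_lex)` is finitely generated as an
inverse semigroup. -/
theorem stmt17 (n : ℕ) (hn : 0 < n) (k : Fin n → ℤ)
    (T : Set (Fin n × ℤ → Option (Fin n × ℤ)))
    (hT : ∀ f ∈ T, IOmap (lexLe n) f)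
    (he : ∀ j : Fin n, epsL n (k j) j ∈ T) (hs : ∀ j : Fin n, sigL n j ∈ T)
    (hcomp : ∀ f ∈ T, ∀ g ∈ T, PComp f g ∈ T)
    (hinv : ∀ f ∈ T, ∀ g : Fin n × ℤ → Option (Fin n × ℤ),
      (∀ x y : Fin n × ℤ, f x = some y ↔ g y = some x) → g ∈ T) :
    ∀ f : Fin n × ℤ → Option (Fin n × ℤ), IOmap (lexLe n) f → f ∈ T := by
  have hclosed : IsInverseClosed T := ⟨hcomp, hinv⟩
  have : Nonempty (Fin n) := Fin.pos_iff_nonempty.1 hn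
  have htranslation (c : Fin n → ℤ) : some ∘ translation c ∈ T :=
    hclosed.some_comp_translation_mem (fun j => sigL_eq_some_comp_translation j ▸ hs j) c
  have heps (a : ℤ) (j : Fin n) : epsL n a j ∈ T := by
    rw [epsL_eq_conj_translation a (k j)]
    exact hcomp _ (htranslation _) _ (hcomp _ (he j) _ (htranslation _))
  refine fun f hf => hclosed.mem_of_IOmap (fun g => ?_) (fun p => ?_) hf
  · obtain ⟨c, hc⟩ := exists_eq_translation_of_relIso g
    exact hc ▸ htranslation c
  · refine ⟨epsEmbedding (p.2 - 1) p.1, ?_, ?_⟩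
    · rw [range_epsEmbedding, sub_add_cancel]
    · exact some_comp_epsEmbedding _ _ ▸ heps (p.2 - 1) p.1
end
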